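/- Telescoping bound on the variational distance of polarized distributions: let P and Q be probability distributions on {0,1}^N × 𝒴 with the same conditional Q(y|u^{1:N}) = P(y|u^{1:N}), and suppose Q(u^i|u^{1:i-1}) = P(u^i|u^{1:i-1}) for all i outside a set A ⊆ [N], while Q(u^i|u^{1:i-1}) = 1/2 for i ∈ A. Then the total variation distance satisfies 2‖Q - P‖_{TV} ≤ Σ_{i∈A} E_{u^{1:i-1}∼P} [ 2‖Q_{U^i|u^{1:i-1}} - P_{U^i|u^{1:i-1}}‖_{TV} ] ≤ Σ_{i∈A} √(2 ln 2 · (1 - H(U^i|U^{1:i-1}))), where H is in bits. -/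

import Mathlib

/-- Prefix of length `i` of a binary word of length `N`. -/
def pref {N : ℕ} (i : ℕ) (h : i ≤ N) (u : Fin N → Bool) : Fin i → Bool :=
  fun j => u (Fin.castLE h j)

/-- Marginal probability, under the joint pmf `P` on `(Fin N → Bool) × Y`, that the
first `i` bits equal `v`. -/
noncomputable def marg {N : ℕ} {Y : Type*} [Fintype Y]
    (P : (Fin N → Bool) × Y → ℝ) (i : ℕ) (h : i ≤ N) (v : Fin i → Bool) : ℝ :=
  ∑ u : Fin N → Bool, ∑ y : Y, if pref i h u = v then P (u, y) else 0

/-- Conditional probability `P(U^i = b | U^{1:i-1} = v)` (0-indexed bit `i`). -/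
noncomputable def condBit {N : ℕ} {Y : Type*} [Fintype Y]
    (P : (Fin N → Bool) × Y → ℝ) (i : ℕ) (h : i < N) (v : Fin i → Bool) (b : Bool) : ℝ :=
  marg P (i + 1) h (Fin.snoc v b) / marg P i (le_of_lt h) v

/-- Conditional entropy `H(U^i | U^{1:i-1})` in bits. -/
noncomputable def condEnt {N : ℕ} {Y : Type*} [Fintype Y]
    (P : (Fin N → Bool) × Y → ℝ) (i : ℕ) (h : i < N) : ℝ :=
  -∑ v : Fin i → Bool, ∑ b : Bool,
      marg P (i + 1) h (Fin.snoc v b) * Real.logb 2 (condBit P i h v b)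

/-!
Both `P` and `Q` factor as (law of the prefix) × (conditional law of the next coordinate). Revealing
one more coordinate turns `q₁ q₂ - p₁ p₂` into `(q₁ - p₁) q₂ + p₁ (q₂ - p₂)`, so the `ℓ¹` distance
grows by at most the `P`-average of the distance between the two conditional laws. That average
vanishes for the channel output and for the bits outside `A`. For a bit in `A`, Pinsker's inequality
against the uniform bit bounds it prefix by prefix, and Jensen's inequality moves the average inside
the square root.
-/

section TotalVariation

variable {β : Type*} [Fintype β]

theorem mul_div_sum_cancel {p : β → ℝ} (hp : ∀ b, 0 ≤ p b) (b : β) :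
    (∑ c, p c) * (p b / ∑ c, p c) = p b :=
  mul_div_cancel_of_imp' fun h =>
    (Finset.sum_eq_zero_iff_of_nonneg fun c _ => hp c).1 h b (Finset.mem_univ b)

theorem sum_div_sum_le_one (p : β → ℝ) : ∑ b, p b / ∑ c, p c ≤ 1 := by
  rw [← Finset.sum_div]
  exact div_self_le_one _

theorem sum_abs_sub_le_abs_sub_sum_add {p q : β → ℝ} (hp : ∀ b, 0 ≤ p b) (hq : ∀ b, 0 ≤ q b) :
    ∑ b, |q b - p b| ≤ |∑ b, q b - ∑ b, p b| +
      (∑ b, p b) * ∑ b, |q b / ∑ c, q c - p b / ∑ c, p c| := by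
  have hybrid (b : β) : |q b - p b| ≤ |∑ c, q c - ∑ c, p c| * (q b / ∑ c, q c) +
      (∑ c, p c) * |q b / ∑ c, q c - p b / ∑ c, p c| := by
    calc |q b - p b|
        = |(∑ c, q c - ∑ c, p c) * (q b / ∑ c, q c) +
            (∑ c, p c) * (q b / ∑ c, q c - p b / ∑ c, p c)| := by
          rw [sub_mul, mul_sub, mul_div_sum_cancel hq, mul_div_sum_cancel hp, sub_add_sub_cancel]
      _ ≤ _ := abs_add_le _ _
      _ = _ := by
          rw [abs_mul, abs_mul, abs_of_nonneg (Finset.sum_nonneg fun c _ => hp c),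
            abs_of_nonneg (div_nonneg (hq b) (Finset.sum_nonneg fun c _ => hq c))]
  calc ∑ b, |q b - p b|
      ≤ ∑ b, (|∑ c, q c - ∑ c, p c| * (q b / ∑ c, q c) +
          (∑ c, p c) * |q b / ∑ c, q c - p b / ∑ c, p c|) := Finset.sum_le_sum fun b _ => hybrid b
    _ = |∑ c, q c - ∑ c, p c| * (∑ b, q b / ∑ c, q c) +
          (∑ c, p c) * ∑ b, |q b / ∑ c, q c - p b / ∑ c, p c| := by
        rw [Finset.sum_add_distrib, Finset.mul_sum, Finset.mul_sum]
    _ ≤ _ := by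
        gcongr
        exact mul_le_of_le_one_right (abs_nonneg _) (sum_div_sum_le_one q)

end TotalVariation

section Pinsker

open Real Set

theorem concaveOn_binEntropy_add_two_mul_sq :
    ConcaveOn ℝ (Icc 0 1) fun p => binEntropy p + 2 * (p - 2⁻¹) ^ 2 := by
  have hderiv {p : ℝ} (hp : p ∈ Ioo (0 : ℝ) 1) :
      HasDerivAt (fun p => binEntropy p + 2 * (p - 2⁻¹) ^ 2)
        (log (1 - p) - log p + 4 * (p - 2⁻¹)) p := by
    convert! (hasDerivAt_binEntropy hp.1.ne' hp.2.ne).add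
      ((((hasDerivAt_id p).sub_const 2⁻¹).pow 2).const_mul 2) using 1
    simp only [id]
    ring
  have hderiv2 {p : ℝ} (hp : p ∈ Ioo (0 : ℝ) 1) :
      HasDerivAt (fun p => log (1 - p) - log p + 4 * (p - 2⁻¹)) (-1 / (1 - p) - 1 / p + 4) p := by
    convert! ((((hasDerivAt_id p).const_sub 1).log (sub_ne_zero.2 hp.2.ne')).sub
      ((hasDerivAt_id p).log hp.1.ne')).add (((hasDerivAt_id p).sub_const 2⁻¹).const_mul 4) using 1
    simp only [id]
    ring
  have hnonpos {p : ℝ} (hp : p ∈ Ioo (0 : ℝ) 1) : -1 / (1 - p) - 1 / p + 4 ≤ 0 := by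
    have h0 : 0 < p := hp.1
    have h1 : 0 < 1 - p := sub_pos.2 hp.2
    have hsq : -1 / (1 - p) - 1 / p + 4 = -((1 - 2 * p) ^ 2 / (p * (1 - p))) := by
      field_simp
      ring
    rw [hsq]
    exact neg_nonpos.2 (by positivity)
  exact concaveOn_of_hasDerivWithinAt2_nonpos (convex_Icc 0 1) (by fun_prop)
    (fun p hp => (hderiv (interior_Icc.subset hp)).hasDerivWithinAt)
    (fun p hp => (hderiv2 (interior_Icc.subset hp)).hasDerivWithinAt)
    fun p hp => hnonpos (interior_Icc.subset hp)

-- The function above is symmetric about `1 / 2`, so concavity puts its maximum there.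
theorem two_mul_sq_le_log_two_sub_binEntropy {p : ℝ} (hp : p ∈ Icc (0 : ℝ) 1) :
    2 * (p - 2⁻¹) ^ 2 ≤ log 2 - binEntropy p := by
  have hp' : 1 - p ∈ Icc (0 : ℝ) 1 := ⟨by linarith [hp.2], by linarith [hp.1]⟩
  have hmid := concaveOn_binEntropy_add_two_mul_sq.2 hp hp'
    (inv_nonneg.2 zero_le_two) (inv_nonneg.2 zero_le_two) (by norm_num)
  have hcenter : (2⁻¹ : ℝ) * p + 2⁻¹ * (1 - p) = 2⁻¹ := by ring
  simp only [smul_eq_mul, hcenter, binEntropy_two_inv, binEntropy_one_sub, sub_self] at hmid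
  linarith

theorem sq_sum_abs_half_sub_le {p : Bool → ℝ} (h0 : ∀ b, 0 ≤ p b) (h1 : ∑ b, p b = 1) :
    (∑ b, |1 / 2 - p b|) ^ 2 ≤ 2 * (log 2 - ∑ b, negMulLog (p b)) := by
  rw [Fintype.sum_bool] at h1
  have hfalse : p false = 1 - p true := by linarith
  have hp : p true ∈ Icc (0 : ℝ) 1 := ⟨h0 true, by linarith [h0 false]⟩
  calc (∑ b, |1 / 2 - p b|) ^ 2
      = (2 * |p true - 2⁻¹|) ^ 2 := by
        rw [Fintype.sum_bool, hfalse, abs_sub_comm,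
          show (1 / 2 : ℝ) - (1 - p true) = p true - 1 / 2 by ring, ← two_mul, one_div]
    _ = 2 * (2 * (p true - 2⁻¹) ^ 2) := by rw [mul_pow, sq_abs]; ring
    _ ≤ 2 * (log 2 - binEntropy (p true)) := by
        gcongr
        exact two_mul_sq_le_log_two_sub_binEntropy hp
    _ = _ := by
        rw [Fintype.sum_bool, hfalse, binEntropy_eq_negMulLog_add_negMulLog_one_sub]

end Pinsker

section Marginals

variable {N : ℕ} {Y : Type*} [Fintype Y] {P : (Fin N → Bool) × Y → ℝ}

theorem pref_succ {i : ℕ} (h : i < N) (u : Fin N → Bool) :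
    pref (i + 1) h u = Fin.snoc (α := fun _ => Bool) (pref i h.le u) (u ⟨i, h⟩) :=
  (Fin.snoc_init_self (pref (i + 1) h u)).symm

theorem marg_nonneg (hP0 : ∀ z, 0 ≤ P z) (i : ℕ) (h : i ≤ N) (v : Fin i → Bool) :
    0 ≤ marg P i h v :=
  Finset.sum_nonneg fun u _ => Finset.sum_nonneg fun y _ => by
    split_ifs
    exacts [hP0 _, le_rfl]

theorem marg_eq_sum_ite (P : (Fin N → Bool) × Y → ℝ) (i : ℕ) (h : i ≤ N) (v : Fin i → Bool) :
    marg P i h v = ∑ u, if pref i h u = v then ∑ y, P (u, y) else 0 :=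
  Finset.sum_congr rfl fun u _ => by split_ifs <;> simp

theorem sum_marg_snoc (P : (Fin N → Bool) × Y → ℝ) (i : ℕ) (h : i < N) (v : Fin i → Bool) :
    ∑ b, marg P (i + 1) h (Fin.snoc v b) = marg P i h.le v := by
  simp only [marg_eq_sum_ite, pref_succ, Fin.snoc_inj, ite_and]
  rw [Finset.sum_comm]
  refine Finset.sum_congr rfl fun u _ => ?_
  split_ifs <;> simp

theorem sum_marg (P : (Fin N → Bool) × Y → ℝ) (i : ℕ) (h : i ≤ N) :
    ∑ v, marg P i h v = ∑ z, P z := by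
  simp only [marg_eq_sum_ite]
  rw [Finset.sum_comm, Fintype.sum_prod_type]
  simp

theorem marg_self (P : (Fin N → Bool) × Y → ℝ) (u : Fin N → Bool) :
    marg P N le_rfl u = ∑ y, P (u, y) := by
  have hpref (w : Fin N → Bool) : pref N le_rfl w = w := rfl
  simp [marg_eq_sum_ite, hpref]

theorem condBit_eq_div_sum (P : (Fin N → Bool) × Y → ℝ) (i : ℕ) (h : i < N) (v : Fin i → Bool)
    (b : Bool) :
    condBit P i h v b =
      marg P (i + 1) h (Fin.snoc v b) / ∑ c, marg P (i + 1) h (Fin.snoc v c) := by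
  rw [condBit, sum_marg_snoc]

theorem marg_mul_condBit (hP0 : ∀ z, 0 ≤ P z) (i : ℕ) (h : i < N) (v : Fin i → Bool) (b : Bool) :
    marg P i h.le v * condBit P i h v b = marg P (i + 1) h (Fin.snoc v b) := by
  rw [condBit_eq_div_sum, ← sum_marg_snoc]
  exact mul_div_sum_cancel (fun c => marg_nonneg hP0 _ _ (Fin.snoc v c)) b

theorem condBit_nonneg (hP0 : ∀ z, 0 ≤ P z) (i : ℕ) (h : i < N) (v : Fin i → Bool) (b : Bool) :
    0 ≤ condBit P i h v b :=
  div_nonneg (marg_nonneg hP0 _ _ _) (marg_nonneg hP0 _ _ _)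

theorem sum_condBit (i : ℕ) (h : i < N) {v : Fin i → Bool} (hv : marg P i h.le v ≠ 0) :
    ∑ b, condBit P i h v b = 1 := by
  simp only [condBit]
  rw [← Finset.sum_div, sum_marg_snoc, div_self hv]

theorem log_two_mul_condEnt (hP0 : ∀ z, 0 ≤ P z) (i : ℕ) (h : i < N) :
    Real.log 2 * condEnt P i h =
      ∑ v, marg P i h.le v * ∑ b, Real.negMulLog (condBit P i h v b) := by
  have hlog : Real.log 2 ≠ 0 := (Real.log_pos one_lt_two).ne'
  simp only [condEnt, ← marg_mul_condBit hP0, ← Finset.sum_neg_distrib, Finset.mul_sum]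
  refine Finset.sum_congr rfl fun v _ => Finset.sum_congr rfl fun b _ => ?_
  rw [Real.negMulLog, Real.logb]
  field_simp

end Marginals

section Telescoping

variable {N : ℕ} {Y : Type*} [Fintype Y] {P Q : (Fin N → Bool) × Y → ℝ}

/-- The average, over a prefix `v` of law `P`, of the `ℓ¹` distance (twice the total variation
distance) between the laws under `Q` and under `P` of bit `i` (0-indexed) given `v`. -/
noncomputable def condL1Dist (P Q : (Fin N → Bool) × Y → ℝ) (i : ℕ) (h : i < N) : ℝ :=
  ∑ v : Fin i → Bool, marg P i h.le v * ∑ b : Bool, |condBit Q i h v b - condBit P i h v b|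

theorem condL1Dist_eq_zero {i : ℕ} {h : i < N}
    (hcond : ∀ v, marg P i h.le v ≠ 0 → ∀ b, condBit Q i h v b = condBit P i h v b) :
    condL1Dist P Q i h = 0 :=
  Finset.sum_eq_zero fun v _ => by
    by_cases hv : marg P i h.le v = 0
    · rw [hv, zero_mul]
    · simp [hcond v hv]

theorem sum_abs_marg_succ_sub_le (hP0 : ∀ z, 0 ≤ P z) (hQ0 : ∀ z, 0 ≤ Q z) (i : ℕ) (h : i < N) :
    ∑ v, |marg Q (i + 1) h v - marg P (i + 1) h v| ≤
      ∑ v, |marg Q i h.le v - marg P i h.le v| + condL1Dist P Q i h := by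
  rw [← (Fin.snocEquiv fun _ : Fin (i + 1) => Bool).sum_comp, Fintype.sum_prod_type_right,
    condL1Dist, ← Finset.sum_add_distrib]
  refine Finset.sum_le_sum fun v _ => ?_
  simp only [condBit_eq_div_sum]
  rw [← sum_marg_snoc Q i h v, ← sum_marg_snoc P i h v]
  exact sum_abs_sub_le_abs_sub_sum_add (fun b => marg_nonneg hP0 _ _ (Fin.snoc v b))
    fun b => marg_nonneg hQ0 _ _ (Fin.snoc v b)

theorem sum_abs_marg_sub_le_sum_condL1Dist (hP0 : ∀ z, 0 ≤ P z) (hQ0 : ∀ z, 0 ≤ Q z)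
    (hPQ : ∑ z, Q z = ∑ z, P z) (k : ℕ) (hk : k ≤ N) :
    ∑ v, |marg Q k hk v - marg P k hk v| ≤
      ∑ i : Fin k, condL1Dist P Q i (i.isLt.trans_le hk) := by
  induction k with
  | zero =>
    have hmarg (R : (Fin N → Bool) × Y → ℝ) (v : Fin 0 → Bool) : marg R 0 hk v = ∑ z, R z := by
      rw [← sum_marg R 0 hk, Fintype.sum_subsingleton _ v]
    simp [hmarg, hPQ]
  | succ k ih =>
    rw [Fin.sum_univ_castSucc]
    exact (sum_abs_marg_succ_sub_le hP0 hQ0 k hk).trans (add_le_add_left (ih _) _)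

theorem sum_abs_sub_le_sum_abs_marg_sub (hP0 : ∀ z, 0 ≤ P z) (hQ0 : ∀ z, 0 ≤ Q z)
    (hchan : ∀ u, ∑ y', P (u, y') ≠ 0 → ∀ y,
      Q (u, y) / (∑ y', Q (u, y')) = P (u, y) / (∑ y', P (u, y'))) :
    ∑ z, |Q z - P z| ≤ ∑ u, |marg Q N le_rfl u - marg P N le_rfl u| := by
  rw [Fintype.sum_prod_type]
  refine Finset.sum_le_sum fun u _ => ?_
  rw [marg_self, marg_self]
  refine (sum_abs_sub_le_abs_sub_sum_add (fun y => hP0 (u, y)) fun y => hQ0 (u, y)).trans_eq ?_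
  by_cases hu : ∑ y, P (u, y) = 0
  · rw [hu, zero_mul, add_zero]
  · simp [hchan u hu]

theorem sq_condL1Dist_le (hP0 : ∀ z, 0 ≤ P z) (hP1 : ∑ z, P z = 1) {i : ℕ} {h : i < N}
    (hunif : ∀ v, marg P i h.le v ≠ 0 → ∀ b, condBit Q i h v b = 1 / 2) :
    condL1Dist P Q i h ^ 2 ≤ 2 * Real.log 2 * (1 - condEnt P i h) := by
  have hmass : ∑ v, marg P i h.le v = 1 := (sum_marg P i h.le).trans hP1
  have pinsker (v : Fin i → Bool) :
      marg P i h.le v * (∑ b, |condBit Q i h v b - condBit P i h v b|) ^ 2 ≤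
        marg P i h.le v * (2 * (Real.log 2 - ∑ b, Real.negMulLog (condBit P i h v b))) := by
    by_cases hv : marg P i h.le v = 0
    · simp [hv]
    · simp only [hunif v hv]
      exact mul_le_mul_of_nonneg_left
        (sq_sum_abs_half_sub_le (condBit_nonneg hP0 i h v) (sum_condBit i h hv))
        (marg_nonneg hP0 i h.le v)
  calc condL1Dist P Q i h ^ 2
      ≤ ∑ v, marg P i h.le v * (∑ b, |condBit Q i h v b - condBit P i h v b|) ^ 2 :=
        Real.pow_arith_mean_le_arith_mean_pow_of_even _ _ _ (fun v _ => marg_nonneg hP0 i h.le v)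
          hmass even_two
    _ ≤ ∑ v, marg P i h.le v * (2 * (Real.log 2 - ∑ b, Real.negMulLog (condBit P i h v b))) :=
        Finset.sum_le_sum fun v _ => pinsker v
    _ = 2 * (Real.log 2 * ∑ v, marg P i h.le v -
          ∑ v, marg P i h.le v * ∑ b, Real.negMulLog (condBit P i h v b)) := by
        rw [Finset.mul_sum, ← Finset.sum_sub_distrib, Finset.mul_sum]
        exact Finset.sum_congr rfl fun v _ => by ring
    _ = 2 * Real.log 2 * (1 - condEnt P i h) := by
        rw [hmass, ← log_two_mul_condEnt hP0]
        ring

end Telescoping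

-- At a `Q`-null prefix `v`, `condBit Q i v b` is `0 / 0 = 0` and cannot equal `1 / 2`, so the
-- conditional laws are compared only on prefixes of positive `P`-mass.
theorem polarized_tv_telescoping_general {N : ℕ} {Y : Type*} [Fintype Y]
    (P Q : (Fin N → Bool) × Y → ℝ)
    (hP0 : ∀ z, 0 ≤ P z) (hP1 : ∑ z, P z = 1)
    (hQ0 : ∀ z, 0 ≤ Q z) (hQ1 : ∑ z, Q z = 1)
    (A : Finset (Fin N))
    (hchan : ∀ u : Fin N → Bool, ∑ y', P (u, y') ≠ 0 → ∀ y : Y,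
      Q (u, y) / (∑ y', Q (u, y')) = P (u, y) / (∑ y', P (u, y')))
    (hoffA : ∀ i : Fin N, i ∉ A → ∀ v : Fin i.val → Bool, marg P i.val i.isLt.le v ≠ 0 →
      ∀ b : Bool, condBit Q i.val i.isLt v b = condBit P i.val i.isLt v b)
    (honA : ∀ i : Fin N, i ∈ A → ∀ v : Fin i.val → Bool, marg P i.val i.isLt.le v ≠ 0 →
      ∀ b : Bool, condBit Q i.val i.isLt v b = 1 / 2) :
    ∑ z, |Q z - P z| ≤ ∑ i ∈ A, condL1Dist P Q i.val i.isLt ∧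
      ∑ i ∈ A, condL1Dist P Q i.val i.isLt ≤
        ∑ i ∈ A, Real.sqrt (2 * Real.log 2 * (1 - condEnt P i.val i.isLt)) := by
  constructor
  · calc ∑ z, |Q z - P z|
        ≤ ∑ u, |marg Q N le_rfl u - marg P N le_rfl u| :=
          sum_abs_sub_le_sum_abs_marg_sub hP0 hQ0 hchan
      _ ≤ ∑ i : Fin N, condL1Dist P Q i.val i.isLt :=
          sum_abs_marg_sub_le_sum_condL1Dist hP0 hQ0 (hQ1.trans hP1.symm) N le_rfl
      _ = ∑ i ∈ A, condL1Dist P Q i.val i.isLt :=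
          (Finset.sum_subset A.subset_univ fun i _ hi => condL1Dist_eq_zero (hoffA i hi)).symm
  · exact Finset.sum_le_sum fun i hi => Real.le_sqrt_of_sq_le (sq_condL1Dist_le hP0 hP1 (honA i hi))

/-- Telescoping bound on the variational distance of polarized distributions, with
the Pinsker step. -/
theorem polarized_tv_telescoping {N : ℕ} {Y : Type*} [Fintype Y]
    (P Q : (Fin N → Bool) × Y → ℝ)
    (hP0 : ∀ z, 0 ≤ P z) (hP1 : ∑ z, P z = 1)
    (hQ0 : ∀ z, 0 ≤ Q z) (hQ1 : ∑ z, Q z = 1)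
    (A : Finset (Fin N))
    (hchan : ∀ (u : Fin N → Bool) (y : Y),
      Q (u, y) / (∑ y', Q (u, y')) = P (u, y) / (∑ y', P (u, y')))
    (hoffA : ∀ i : Fin N, i ∉ A → ∀ (v : Fin i.val → Bool) (b : Bool),
      condBit Q i.val i.isLt v b = condBit P i.val i.isLt v b)
    (honA : ∀ i : Fin N, i ∈ A → ∀ (v : Fin i.val → Bool) (b : Bool),
      condBit Q i.val i.isLt v b = 1 / 2) :
    (∑ z : (Fin N → Bool) × Y, |Q z - P z|)
        ≤ (∑ i ∈ A, ∑ v : Fin i.val → Bool, marg P i.val i.isLt.le v *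
            ∑ b : Bool, |condBit Q i.val i.isLt v b - condBit P i.val i.isLt v b|)
    ∧ (∑ i ∈ A, ∑ v : Fin i.val → Bool, marg P i.val i.isLt.le v *
            ∑ b : Bool, |condBit Q i.val i.isLt v b - condBit P i.val i.isLt v b|)
        ≤ ∑ i ∈ A, Real.sqrt (2 * Real.log 2 * (1 - condEnt P i.val i.isLt)) :=
  polarized_tv_telescoping_general P Q hP0 hP1 hQ0 hQ1 A (fun u _ => hchan u)
    (fun i hi v _ => hoffA i hi v) fun i hi v _ => honA i hi v
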